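/- arXiv:2008.06401 — 2 statements merged into one kernel-verified Lean document; each statement's English description precedes it below -/
import Mathlib

section
/- For every non-negative integer k and every non-negative integer n, the number of (25k+4)-colour partitions of 25n+21 is divisible by 5; that is, p_{25k+4}(25n+21) ≡ 0 (mod 5). -/
/-- `colouredPartitions r n` is the number of `r`-colour partitions of `n`:
multisets of pairs `(m, c)` with `m` a positive integer part and `c` one of `r`
colours, whose parts (first components, with multiplicity) sum to `n`.  Such a
multiset is encoded by its multiplicity function `f : ℕ+ × Fin r →₀ ℕ`. -/
noncomputable def colouredPartitions (r n : ℕ) : ℕ :=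
  Nat.card {f : ℕ+ × Fin r →₀ ℕ // (f.sum fun x m => (x.1 : ℕ) * m) = n}
open PowerSeries in
open scoped PowerSeries.WithPiTopology in
lemma cp_partition_series :
    (PowerSeries.mk fun n => (Fintype.card (Nat.Partition n) : ZMod 5)) *
      pentagonalSeries (ZMod 5) = 1 := by
  let _ : TopologicalSpace (ZMod 5) := ⊥
  have _ : DiscreteTopology (ZMod 5) := ⟨rfl⟩
  have h1 := Nat.Partition.hasProd_powerSeriesMk_card_restricted (ZMod 5) (fun _ => True)
  have h2 := WithPiTopology.hasProd_one_sub_X_pow (ZMod 5)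
  have h3 := h1.mul h2
  have e : (fun n => ((Nat.Partition.restricted n (fun _ => True)).card : ZMod 5)) =
      fun n => (Fintype.card (Nat.Partition n) : ZMod 5) := by
    funext n
    simp [Nat.Partition.restricted, Finset.card_univ]
  rw [e] at h3
  refine h3.unique ?_
  have : (fun b : ℕ => (if True then ∑' j : ℕ, (X : (ZMod 5)⟦X⟧) ^ ((b + 1) * j) else 1) *
      (1 - X ^ (b + 1))) = fun _ => 1 := by
    funext b
    simp only [if_true, pow_mul]
    exact WithPiTopology.tsum_pow_mul_one_sub_of_constantCoeff_eq_zero (by simp)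
  rw [this]
  exact hasProd_one

lemma cp_sum_toMultiset (f : ℕ+ →₀ ℕ) :
    ((Finsupp.toMultiset f).map (fun x : ℕ+ => (x : ℕ))).sum = f.sum fun x m => (x : ℕ) * m := by
  induction f using Finsupp.induction_linear with
  | zero => simp
  | add f g hf hg =>
    rw [Finsupp.sum_add_index' (by simp) (by intros; ring), ← hf, ← hg]
    simp
  | single a b =>
    simp [Finsupp.toMultiset_single, Multiset.map_nsmul, Multiset.sum_nsmul, mul_comm]

noncomputable def cpOneEquiv (n : ℕ) :
    {f : ℕ+ →₀ ℕ // (f.sum fun x m => (x : ℕ) * m) = n} ≃ Nat.Partition n := by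
  refine Equiv.ofBijective (fun f =>
    ⟨(Finsupp.toMultiset f.1).map (fun x : ℕ+ => (x : ℕ)), ?_, ?_⟩) ⟨?_, ?_⟩
  · intro i hi
    obtain ⟨x, _, rfl⟩ := Multiset.mem_map.1 hi
    exact x.pos
  · rw [cp_sum_toMultiset, f.2]
  · intro f g h
    have h' := congrArg Nat.Partition.parts h
    simp only at h'
    have := Multiset.map_injective PNat.coe_injective h'
    apply Subtype.ext
    classical
    ext a
    rw [← Finsupp.count_toMultiset, this, Finsupp.count_toMultiset]
  · intro p
    obtain ⟨s, hs⟩ : ∃ s : Multiset ℕ+, s.map (fun x : ℕ+ => (x : ℕ)) = p.parts := by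
      have hp : ∀ x ∈ p.parts, 0 < x := fun x hx => p.parts_pos hx
      generalize p.parts = t at hp
      lift t to Multiset ℕ+ using hp
      exact ⟨t, rfl⟩
    classical
    have hs' : Finsupp.toMultiset (Multiset.toFinsupp s) = s := by simp
    refine ⟨⟨Multiset.toFinsupp s, ?_⟩, ?_⟩
    · rw [← cp_sum_toMultiset, hs', hs, p.parts_sum]
    · apply Nat.Partition.ext
      simp [hs]

def cpSplit (r : ℕ) : (ℕ+ × Fin r) ⊕ ℕ+ ≃ ℕ+ × Fin (r + 1) where
  toFun := Sum.elim (fun x => (x.1, x.2.castSucc)) (fun x => (x, Fin.last r))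
  invFun x := Fin.lastCases (motive := fun _ => (ℕ+ × Fin r) ⊕ ℕ+) (Sum.inr x.1)
    (fun i => Sum.inl (x.1, i)) x.2
  left_inv := by rintro (x | x) <;> simp
  right_inv := by
    rintro ⟨x, i⟩
    induction i using Fin.lastCases <;> simp

lemma cp_sum_sum {α β : Type*} (h : α ⊕ β →₀ ℕ) (w : α ⊕ β → ℕ) :
    (h.sum fun x m => w x * m) =
    ((Finsupp.sumFinsuppEquivProdFinsupp h).1.sum fun x m => w (Sum.inl x) * m) +
    ((Finsupp.sumFinsuppEquivProdFinsupp h).2.sum fun x m => w (Sum.inr x) * m) := by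
  classical
  induction h using Finsupp.induction_linear with
  | zero =>
    have h1 : (Finsupp.sumFinsuppEquivProdFinsupp (0 : α ⊕ β →₀ ℕ)).1 = 0 := by ext; rfl
    have h2 : (Finsupp.sumFinsuppEquivProdFinsupp (0 : α ⊕ β →₀ ℕ)).2 = 0 := by ext; rfl
    simp [h1, h2]
  | add f g hf hg =>
    have h1 : (Finsupp.sumFinsuppEquivProdFinsupp (f + g)).1 =
      (Finsupp.sumFinsuppEquivProdFinsupp f).1 + (Finsupp.sumFinsuppEquivProdFinsupp g).1 := by
      ext; rfl
    have h2 : (Finsupp.sumFinsuppEquivProdFinsupp (f + g)).2 =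
      (Finsupp.sumFinsuppEquivProdFinsupp f).2 + (Finsupp.sumFinsuppEquivProdFinsupp g).2 := by
      ext; rfl
    rw [h1, h2]
    rw [Finsupp.sum_add_index' (by simp) (by intros; ring), hf, hg,
      Finsupp.sum_add_index' (by simp) (by intros; ring),
      Finsupp.sum_add_index' (by simp) (by intros; ring)]
    ring
  | single a b =>
    rcases a with a | a
    · have h1 : (Finsupp.sumFinsuppEquivProdFinsupp
          (Finsupp.single (Sum.inl a : α ⊕ β) b)).1 = Finsupp.single a b := by
        ext x
        simp [Finsupp.single_apply]
      have h2 : (Finsupp.sumFinsuppEquivProdFinsupp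
          (Finsupp.single (Sum.inl a : α ⊕ β) b)).2 = 0 := by
        ext x
        simp [Finsupp.single_apply]
      simp [h1, h2]
    · have h1 : (Finsupp.sumFinsuppEquivProdFinsupp
          (Finsupp.single (Sum.inr a : α ⊕ β) b)).2 = Finsupp.single a b := by
        ext x
        simp [Finsupp.single_apply]
      have h2 : (Finsupp.sumFinsuppEquivProdFinsupp
          (Finsupp.single (Sum.inr a : α ⊕ β) b)).1 = 0 := by
        ext x
        simp [Finsupp.single_apply]
      simp [h1, h2]

lemma cp_sum_split (r : ℕ) (f : ℕ+ × Fin (r + 1) →₀ ℕ) :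
    (f.sum fun x m => (x.1 : ℕ) * m) =
    ((Finsupp.sumFinsuppEquivProdFinsupp ((Finsupp.equivMapDomain (cpSplit r).symm) f)).1.sum
      fun x m => (x.1 : ℕ) * m) +
    ((Finsupp.sumFinsuppEquivProdFinsupp ((Finsupp.equivMapDomain (cpSplit r).symm) f)).2.sum
      fun x m => (x : ℕ) * m) := by
  have h1 := cp_sum_sum (Finsupp.equivMapDomain (cpSplit r).symm f)
    (fun x => ((cpSplit r x).1 : ℕ))
  rw [Finsupp.sum_equivMapDomain] at h1
  simp only [Equiv.apply_symm_apply] at h1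
  exact h1

noncomputable def cpGenEquiv {A B C : Type*} (E : A ≃ B × C) (u : A → ℕ) (v : B → ℕ) (w : C → ℕ)
    (hE : ∀ f, u f = v (E f).1 + w (E f).2) (n : ℕ) :
    {f : A // u f = n} ≃ Σ p : Finset.HasAntidiagonal.antidiagonal n,
      {f : B // v f = p.1.1} × {f : C // w f = p.1.2} := by
  refine Equiv.ofBijective (fun f => ⟨⟨(v (E f.1).1, w (E f.1).2), by
    rw [Finset.HasAntidiagonal.mem_antidiagonal, ← hE, f.2]⟩, ⟨(E f.1).1, rfl⟩, ⟨(E f.1).2, rfl⟩⟩)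
    (Function.bijective_iff_has_inverse.2 ⟨fun x => ⟨E.symm (x.2.1.1, x.2.2.1), by
    rw [hE, Equiv.apply_symm_apply, x.2.1.2, x.2.2.2]
    exact Finset.HasAntidiagonal.mem_antidiagonal.1 x.1.2⟩, ?_, ?_⟩)
  · intro f
    simp
  · apply Function.LeftInverse.rightInverse_of_surjective
    · intro f
      simp
    · rintro ⟨⟨⟨a, b⟩, h⟩, ⟨f, hf⟩, ⟨g, hg⟩⟩
      dsimp only at hf hg
      subst hf hg
      obtain ⟨z, hz⟩ := E.surjective (f, g)
      have h1 : f = (E z).1 := by rw [hz]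
      have h2 : g = (E z).2 := by rw [hz]
      clear hz
      subst h1 h2
      exact ⟨⟨z, by rw [hE]; exact Finset.HasAntidiagonal.mem_antidiagonal.1 h⟩, rfl⟩

noncomputable def cpSuccEquiv (r n : ℕ) :
    {f : ℕ+ × Fin (r + 1) →₀ ℕ // (f.sum fun x m => (x.1 : ℕ) * m) = n} ≃
    Σ p : Finset.HasAntidiagonal.antidiagonal n,
      {f : ℕ+ × Fin r →₀ ℕ // (f.sum fun x m => (x.1 : ℕ) * m) = p.1.1} ×
      {f : ℕ+ →₀ ℕ // (f.sum fun x m => (x : ℕ) * m) = p.1.2} :=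
  cpGenEquiv ((Finsupp.equivCongrLeft (cpSplit r).symm).trans Finsupp.sumFinsuppEquivProdFinsupp)
    (fun f => f.sum fun x m => (x.1 : ℕ) * m) (fun f => f.sum fun x m => (x.1 : ℕ) * m)
    (fun f => f.sum fun x m => (x : ℕ) * m) (cp_sum_split r) n

lemma cp_finite (r n : ℕ) :
    Finite {f : ℕ+ × Fin r →₀ ℕ // (f.sum fun x m => (x.1 : ℕ) * m) = n} := by
  induction r generalizing n with
  | zero => infer_instance
  | succ r ih =>
    have := ih
    have : ∀ n, Finite {f : ℕ+ →₀ ℕ // (f.sum fun x m => (x : ℕ) * m) = n} :=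
      fun n => Finite.of_equiv _ (cpOneEquiv n).symm
    exact Finite.of_equiv _ (cpSuccEquiv r n).symm

lemma cp_succ (r n : ℕ) : colouredPartitions (r + 1) n =
    ∑ p ∈ Finset.HasAntidiagonal.antidiagonal n, colouredPartitions r p.1 * Fintype.card (Nat.Partition p.2) := by
  have := cp_finite r
  have : ∀ n, Finite {f : ℕ+ →₀ ℕ // (f.sum fun x m => (x : ℕ) * m) = n} :=
      fun n => Finite.of_equiv _ (cpOneEquiv n).symm
  rw [colouredPartitions, Nat.card_congr (cpSuccEquiv r n), Nat.card_sigma,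
    ← Finset.sum_coe_sort (Finset.HasAntidiagonal.antidiagonal n)]
  refine Finset.sum_congr rfl fun p _ => ?_
  rw [Nat.card_prod, Nat.card_congr (cpOneEquiv _),
    Nat.card_eq_fintype_card (α := Nat.Partition _), colouredPartitions]

open PowerSeries in
lemma cp_series (r : ℕ) :
    (PowerSeries.mk fun n => (colouredPartitions r n : ZMod 5)) *
      pentagonalSeries (ZMod 5) ^ r = 1 := by
  induction r with
  | zero =>
    simp only [pow_zero, mul_one]
    ext n
    rw [coeff_mk, coeff_one, colouredPartitions]
    split_ifs with h
    · subst h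
      have : Unique {f : ℕ+ × Fin 0 →₀ ℕ // (f.sum fun x m => (x.1 : ℕ) * m) = 0} :=
        ⟨⟨⟨0, by simp⟩⟩, fun x => Subsingleton.elim _ _⟩
      rw [Nat.card_unique]; simp
    · have : IsEmpty {f : ℕ+ × Fin 0 →₀ ℕ // (f.sum fun x m => (x.1 : ℕ) * m) = n} := by
        refine ⟨fun f => h ?_⟩
        rw [← f.2, Subsingleton.elim f.1 0]; simp
      rw [Nat.card_of_isEmpty]; simp
  | succ r ih =>
    have : (PowerSeries.mk fun n => (colouredPartitions (r + 1) n : ZMod 5)) =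
      (PowerSeries.mk fun n => (colouredPartitions r n : ZMod 5)) *
      (PowerSeries.mk fun n => (Fintype.card (Nat.Partition n) : ZMod 5)) := by
      ext n
      simp [coeff_mul, cp_succ]
    rw [this, pow_succ, mul_mul_mul_comm, ih, cp_partition_series, one_mul]

lemma cp_pent_bound (m : ℤ) : m ∈ Finset.Icc (-(pentagonal m : ℤ)) (pentagonal m) := by
  have h := two_mul_natCast_pentagonal m
  rw [Finset.mem_Icc]
  rcases lt_trichotomy m 0 with h0 | h0 | h0
  · constructor <;> nlinarith
  · subst h0; simp
  · constructor <;> nlinarith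

/-- sign -/
def cpS (m : ℤ) : ZMod 5 := ((Int.negOnePow m : ℤˣ) : ℤ)

/-- partial theta series -/
noncomputable def cpT (i : ℤ) : PowerSeries (ZMod 5) :=
  PowerSeries.mk fun e => ∑ m ∈ Finset.Icc (-(e : ℤ)) e,
    if pentagonal m = e ∧ m % 5 = i then cpS m else 0

lemma cpT_coeff (i : ℤ) (e N : ℕ) (h : e ≤ N) :
    (cpT i).coeff e = ∑ m ∈ Finset.Icc (-(N : ℤ)) N,
    if pentagonal m = e ∧ m % 5 = i then cpS m else 0 := by
  rw [cpT, PowerSeries.coeff_mk]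
  apply Finset.sum_subset
  · apply Finset.Icc_subset_Icc <;> simpa using h
  · intro m _ hm
    rw [if_neg]
    rintro ⟨rfl, _⟩
    exact hm (cp_pent_bound m)

lemma cpT_mul (i j : ℤ) (N : ℕ) :
    (cpT i * cpT j).coeff N =
      ∑ p ∈ Finset.Icc (-(N : ℤ)) N ×ˢ Finset.Icc (-(N : ℤ)) N,
      if pentagonal p.1 + pentagonal p.2 = N ∧ p.1 % 5 = i ∧ p.2 % 5 = j then cpS p.1 * cpS p.2
      else 0 := by
  rw [PowerSeries.coeff_mul]
  have : ∀ p ∈ Finset.HasAntidiagonal.antidiagonal N, (cpT i).coeff p.1 * (cpT j).coeff p.2 =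
      ∑ q ∈ Finset.Icc (-(N : ℤ)) N ×ˢ Finset.Icc (-(N : ℤ)) N,
      if p = (pentagonal q.1, pentagonal q.2) ∧ q.1 % 5 = i ∧ q.2 % 5 = j then cpS q.1 * cpS q.2
      else 0 := by
    rintro ⟨a, b⟩ hp
    rw [Finset.HasAntidiagonal.mem_antidiagonal] at hp
    dsimp only at hp ⊢
    rw [cpT_coeff i a N (by omega), cpT_coeff j b N (by omega), Finset.sum_mul_sum,
      ← Finset.sum_product']
    refine Finset.sum_congr rfl fun q _ => ?_
    by_cases h1 : pentagonal q.1 = a ∧ q.1 % 5 = i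
    · by_cases h2 : pentagonal q.2 = b ∧ q.2 % 5 = j
      · rw [if_pos h1, if_pos h2, if_pos ⟨by rw [h1.1, h2.1], h1.2, h2.2⟩]
      · rw [if_neg h2, mul_zero, if_neg]
        rintro ⟨h3, _, h5⟩
        exact h2 ⟨(congrArg Prod.snd h3).symm, h5⟩
    · rw [if_neg h1, zero_mul, if_neg]
      rintro ⟨h3, h4, _⟩
      exact h1 ⟨(congrArg Prod.fst h3).symm, h4⟩
  rw [Finset.sum_congr rfl this, Finset.sum_comm]
  refine Finset.sum_congr rfl fun q _ => ?_
  by_cases h : q.1 % 5 = i ∧ q.2 % 5 = j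
  · simp only [h, and_true]
    rw [Finset.sum_ite_eq']
    simp
  · simp [h]

lemma cpF_eq : PowerSeries.pentagonalSeries (ZMod 5) =
    cpT 0 + cpT 1 + cpT 2 + cpT 3 + cpT 4 := by
  ext e
  simp only [map_add]
  simp only [cpT_coeff _ e e le_rfl, ← Finset.sum_add_distrib]
  have : ∀ m : ℤ, ((((if pentagonal m = e ∧ m % 5 = 0 then cpS m else 0) +
      (if pentagonal m = e ∧ m % 5 = 1 then cpS m else 0)) +
      (if pentagonal m = e ∧ m % 5 = 2 then cpS m else 0)) +
      (if pentagonal m = e ∧ m % 5 = 3 then cpS m else 0)) +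
      (if pentagonal m = e ∧ m % 5 = 4 then cpS m else 0) =
      if pentagonal m = e then cpS m else 0 := by
    intro m
    have h5 : m % 5 = 0 ∨ m % 5 = 1 ∨ m % 5 = 2 ∨ m % 5 = 3 ∨ m % 5 = 4 := by omega
    rcases h5 with h | h | h | h | h <;> simp [h]
  simp only [this]
  by_cases he : e ∈ Set.range pentagonal
  · obtain ⟨k, rfl⟩ := he
    rw [PowerSeries.coeff_pentagonalSeries_pentagonal, Finset.sum_eq_single k]
    · simp [cpS]
    · intro b _ hb
      rw [if_neg]
      exact fun h => hb (pentagonal_injective h)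
    · intro h
      exact absurd (cp_pent_bound k) h
  · rw [PowerSeries.coeff_pentagonalSeries_eq_zero _ he, Finset.sum_eq_zero]
    intro m _
    rw [if_neg]
    exact fun h => he ⟨m, h⟩

lemma cpS_mul (a b c d : ℤ) (h : (a + b + c + d) % 2 = 1) :
    cpS a * cpS b + cpS c * cpS d = 0 := by
  have key : Int.negOnePow (a + b) = - Int.negOnePow (c + d) := by
    have : a + b = (c + d) + ((a + b) - (c + d)) := by ring
    rw [this, Int.negOnePow_add, Int.negOnePow_odd (a + b - (c + d)) (by rw [Int.odd_iff]; omega)]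
    simp
  rw [Int.negOnePow_add, Int.negOnePow_add] at key
  have k2 := congrArg (fun u : ℤˣ => ((u : ℤ) : ZMod 5)) key
  simp only [Units.val_mul, Units.val_neg, Int.cast_mul, Int.cast_neg] at k2
  simp only [cpS]
  rw [k2]; ring

lemma cp_rel : cpT 1 * cpT 1 + (cpT 0 + cpT 2) * (cpT 3 + cpT 4) = 0 := by
  have : cpT 1 * cpT 1 + (cpT 0 + cpT 2) * (cpT 3 + cpT 4) =
    cpT 1 * cpT 1 + cpT 3 * cpT 2 + cpT 4 * cpT 0 + cpT 0 * cpT 3 + cpT 2 * cpT 4 := by ring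
  rw [this]
  ext N
  simp only [map_add, cpT_mul, ← Finset.sum_add_distrib, map_zero]
  have : ∀ p : ℤ × ℤ,
     ((((if pentagonal p.1 + pentagonal p.2 = N ∧ p.1 % 5 = 1 ∧ p.2 % 5 = 1 then cpS p.1 * cpS p.2
      else 0) +
     (if pentagonal p.1 + pentagonal p.2 = N ∧ p.1 % 5 = 3 ∧ p.2 % 5 = 2 then cpS p.1 * cpS p.2
      else 0)) +
     (if pentagonal p.1 + pentagonal p.2 = N ∧ p.1 % 5 = 4 ∧ p.2 % 5 = 0 then cpS p.1 * cpS p.2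
      else 0)) +
     (if pentagonal p.1 + pentagonal p.2 = N ∧ p.1 % 5 = 0 ∧ p.2 % 5 = 3 then cpS p.1 * cpS p.2
      else 0)) +
     (if pentagonal p.1 + pentagonal p.2 = N ∧ p.1 % 5 = 2 ∧ p.2 % 5 = 4 then cpS p.1 * cpS p.2
      else 0) =
     if pentagonal p.1 + pentagonal p.2 = N ∧ (p.1 - 2 * p.2 + 1) % 5 = 0 then cpS p.1 * cpS p.2
      else 0 := by
    rintro ⟨a, b⟩
    by_cases h : pentagonal a + pentagonal b = N
    · simp only [h, true_and]
      by_cases h' : (a - 2 * b + 1) % 5 = 0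
      · have h5 : b % 5 = 0 ∨ b % 5 = 1 ∨ b % 5 = 2 ∨ b % 5 = 3 ∨ b % 5 = 4 := by omega
        rw [if_pos h']
        rcases h5 with h | h | h | h | h
        · have : a % 5 = 4 := by omega
          simp [h, this]
        · have : a % 5 = 1 := by omega
          simp [h, this]
        · have : a % 5 = 3 := by omega
          simp [h, this]
        · have : a % 5 = 0 := by omega
          simp [h, this]
        · have : a % 5 = 2 := by omega
          simp [h, this]
      · rw [if_neg h', if_neg (by omega), if_neg (by omega), if_neg (by omega), if_neg (by omega),
          if_neg (by omega)]
        simp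
    · simp [h]
  simp only [this]
  rw [← Finset.sum_filter]
  refine Finset.sum_involution
    (fun p _ => ((2 - 3 * p.1 - 4 * p.2) / 5, (1 + 3 * p.2 - 4 * p.1) / 5)) ?_ ?_ ?_ ?_
  · rintro ⟨m, n⟩ h
    simp only [Finset.mem_filter] at h
    apply cpS_mul
    dsimp only
    omega
  · rintro ⟨m, n⟩ h _ h2
    simp only [Finset.mem_filter] at h
    simp only [Prod.mk.injEq] at h2
    omega
  · rintro ⟨m, n⟩ h
    simp only [Finset.mem_filter] at h ⊢
    obtain ⟨_, h1, h2⟩ := h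
    obtain ⟨a, ha⟩ : ∃ a, a = (2 - 3 * m - 4 * n) / 5 := ⟨_, rfl⟩
    obtain ⟨b, hb⟩ : ∃ b, b = (1 + 3 * n - 4 * m) / 5 := ⟨_, rfl⟩
    rw [← ha, ← hb]
    have ha' : 5 * a = 2 - 3 * m - 4 * n := by omega
    have hb' : 5 * b = 1 + 3 * n - 4 * m := by omega
    have hN : pentagonal a + pentagonal b = N := by
      zify at h1 ⊢
      have e1 := two_mul_natCast_pentagonal a
      have e2 := two_mul_natCast_pentagonal b
      have e3 := two_mul_natCast_pentagonal m
      have e4 := two_mul_natCast_pentagonal n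
      have : 25 * (a * (3 * a - 1) + b * (3 * b - 1)) =
          25 * (m * (3 * m - 1) + n * (3 * n - 1)) := by
        have : 25 * (a * (3 * a - 1) + b * (3 * b - 1)) =
          5 * a * (3 * (5 * a) - 5) + 5 * b * (3 * (5 * b) - 5) := by ring
        rw [this, ha', hb']; ring
      linarith
    refine ⟨?_, hN, by omega⟩
    have b1 := cp_pent_bound a
    have b2 := cp_pent_bound b
    simp only [Finset.mem_Icc, Finset.mem_product] at *
    omega
  · rintro ⟨m, n⟩ h
    simp only [Finset.mem_filter] at h
    simp only [Prod.mk.injEq]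
    omega

open PowerSeries

def cpSup (r : ℕ) (f : PowerSeries (ZMod 5)) : Prop := ∀ n, n % 5 ≠ r % 5 → f.coeff n = 0

lemma cpSup.mul {r s : ℕ} {f g : PowerSeries (ZMod 5)} (hf : cpSup r f) (hg : cpSup s g) :
    cpSup (r + s) (f * g) := by
  intro n hn
  rw [coeff_mul]
  refine Finset.sum_eq_zero fun p hp => ?_
  rw [Finset.HasAntidiagonal.mem_antidiagonal] at hp
  by_cases h1 : p.1 % 5 = r % 5
  · rw [hg p.2 (by omega), mul_zero]
  · rw [hf p.1 h1, zero_mul]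

lemma cpSup.pow {r : ℕ} {f : PowerSeries (ZMod 5)} (hf : cpSup r f) (k : ℕ) :
    cpSup (k * r) (f ^ k) := by
  induction k with
  | zero =>
    intro n hn
    rw [pow_zero, coeff_one, if_neg]
    rintro rfl
    simp at hn
  | succ k ih =>
    rw [pow_succ, add_mul, one_mul]
    exact ih.mul hf

lemma cpSup.add {r : ℕ} {f g : PowerSeries (ZMod 5)} (hf : cpSup r f) (hg : cpSup r g) :
    cpSup r (f + g) := by
  intro n hn
  rw [map_add, hf n hn, hg n hn, add_zero]

lemma cpT_sup (i : ℤ) (r : ℕ) (h : ∀ m, m % 5 = i → pentagonal m % 5 = r % 5) :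
    cpSup r (cpT i) := by
  intro n hn
  rw [cpT, coeff_mk]
  refine Finset.sum_eq_zero fun m _ => ?_
  rw [if_neg]
  rintro ⟨rfl, h2⟩
  exact hn (h m h2)

lemma cp_pent_mod (m : ℤ) (i : ℤ) (r : ℕ) (hm : m % 5 = i)
    (hr : (i * (3 * i - 1) * 3 - r) % 5 = 0) : pentagonal m % 5 = r % 5 := by
  have e := two_mul_natCast_pentagonal m
  obtain ⟨q, hq⟩ : ∃ q, m = 5 * q + i := ⟨m / 5, by omega⟩
  have : m * (3 * m - 1) = i * (3 * i - 1) + 5 * (q * (3 * m - 1) + 3 * i * q) := by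
    rw [hq]; ring
  omega

lemma cp_F4 (n : ℕ) : (pentagonalSeries (ZMod 5) ^ 4).coeff (5 * n + 4) = 0 := by
  have hA : cpSup 0 (cpT 0 + cpT 2) :=
    (cpT_sup 0 0 fun m h => cp_pent_mod m 0 0 h (by norm_num)).add
      (cpT_sup 2 0 fun m h => cp_pent_mod m 2 0 h (by norm_num))
  have hB : cpSup 1 (cpT 1) := cpT_sup 1 1 fun m h => cp_pent_mod m 1 1 h (by norm_num)
  have hC : cpSup 2 (cpT 3 + cpT 4) :=
    (cpT_sup 3 2 fun m h => cp_pent_mod m 3 2 h (by norm_num)).add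
      (cpT_sup 4 2 fun m h => cp_pent_mod m 4 2 h (by norm_num))
  have hrel := cp_rel
  have hF := cpF_eq
  generalize cpT 1 = B at *
  have hF' : pentagonalSeries (ZMod 5) = (cpT 0 + cpT 2) + B + (cpT 3 + cpT 4) := by
    rw [hF]; ring
  clear hF
  generalize cpT 0 + cpT 2 = A at *
  generalize cpT 3 + cpT 4 = C at *
  have h5 : (5 : PowerSeries (ZMod 5)) = 0 := by
    have : (5 : PowerSeries (ZMod 5)) = PowerSeries.C (5 : ZMod 5) :=
      (map_ofNat (PowerSeries.C (R := ZMod 5)) 5).symm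
    rw [this, show (5 : ZMod 5) = 0 from rfl, map_zero]
  have e : pentagonalSeries (ZMod 5) ^ 4 = A ^ 4 * C ^ 0 +
      (4 : ℕ) • (A ^ 3 * B) + (4 : ℕ) • (A ^ 3 * C) + (6 : ℕ) • (A ^ 2 * B ^ 2)
      + (12 : ℕ) • (A ^ 2 * B * C) + (4 : ℕ) • (A * B ^ 3) + (4 : ℕ) • (B ^ 3 * C)
      + (6 : ℕ) • (B ^ 2 * C ^ 2) + (12 : ℕ) • (A * B * C ^ 2) + (4 : ℕ) • (A * C ^ 3)
      + (4 : ℕ) • (B * C ^ 3) + C ^ 4 := by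
    rw [hF']
    simp only [nsmul_eq_mul]
    push_cast
    linear_combination (6 * (A * C) + 6 * B ^ 2) * hrel - B ^ 4 * h5
  have z : ∀ {r : ℕ} {f : PowerSeries (ZMod 5)}, cpSup r f → r % 5 ≠ 4 →
      f.coeff (5 * n + 4) = 0 := fun h hr => h _ (by omega)
  rw [e]
  simp only [map_add, map_nsmul]
  rw [z ((hA.pow 4).mul (hC.pow 0)) (by norm_num), z ((hA.pow 3).mul hB) (by norm_num),
    z ((hA.pow 3).mul hC) (by norm_num), z ((hA.pow 2).mul (hB.pow 2)) (by norm_num),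
    z (((hA.pow 2).mul hB).mul hC) (by norm_num), z (hA.mul (hB.pow 3)) (by norm_num),
    z ((hB.pow 3).mul hC) (by norm_num), z ((hB.pow 2).mul (hC.pow 2)) (by norm_num),
    z ((hA.mul hB).mul (hC.pow 2)) (by norm_num), z (hA.mul (hC.pow 3)) (by norm_num),
    z (hB.mul (hC.pow 3)) (by norm_num), z (hC.pow 4) (by norm_num)]
  simp

lemma cp_F5 (f : PowerSeries (ZMod 5)) : f ^ 5 = f.expand 5 (by norm_num) := by
  have : Fact (Nat.Prime 5) := ⟨by norm_num⟩
  have h := MvPowerSeries.map_frobenius_expand (R := ZMod 5) (σ := Unit) 5 (by norm_num) (f := f)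
  rw [ZMod.frobenius_zmod] at h
  have h2 : f ^ 5 = MvPowerSeries.expand 5 (by norm_num) f := by
    rw [MvPowerSeries.map_id] at h
    exact h.symm
  exact h2

lemma cp_F25 (e : ℕ) (h : e % 5 = 1) (h' : e % 25 ≠ 1) :
    (pentagonalSeries (ZMod 5)).coeff e = 0 := by
  apply coeff_pentagonalSeries_eq_zero
  rintro ⟨m, rfl⟩
  have e := two_mul_natCast_pentagonal m
  have h5 : m % 5 = 0 ∨ m % 5 = 1 ∨ m % 5 = 2 ∨ m % 5 = 3 ∨ m % 5 = 4 := by omega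
  rcases h5 with h5 | h5 | h5 | h5 | h5
  · have := cp_pent_mod m _ 0 h5 (by norm_num); omega
  · obtain ⟨q, hq⟩ : ∃ q, m = 5 * q + 1 := ⟨m / 5, by omega⟩
    have : m * (3 * m - 1) = 25 * (3 * (q * q) + q) + 2 := by rw [hq]; ring
    omega
  · have := cp_pent_mod m _ 0 h5 (by norm_num); omega
  · have := cp_pent_mod m _ 2 h5 (by norm_num); omega
  · have := cp_pent_mod m _ 2 h5 (by norm_num); omega

lemma cp_final (k n : ℕ) (F P G : PowerSeries (ZMod 5)) (hF : F = pentagonalSeries (ZMod 5))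
    (hP : P * F ^ (25 * k + 4) = 1) (hG : G * F = 1) : P.coeff (25 * n + 21) = 0 := by
  have hGp : ∀ j, G ^ j * F ^ j = 1 := fun j => by rw [← mul_pow, hG, one_pow]
  have hQ : ∀ j, (G ^ (5 * k + 1)).coeff (5 * j + 4) = 0 := by
    intro j
    have : G ^ (5 * k + 1) = F ^ 4 * (G ^ (k + 1)).expand 5 (by norm_num) := by
      rw [← cp_F5, ← pow_mul]
      have : (k + 1) * 5 = 5 * k + 1 + 4 := by ring
      rw [this, pow_add]
      linear_combination (-G ^ (5 * k + 1)) * hGp 4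
    rw [this, coeff_mul]
    refine Finset.sum_eq_zero fun p hp => ?_
    rw [Finset.HasAntidiagonal.mem_antidiagonal] at hp
    by_cases h : 5 ∣ p.2
    · obtain ⟨q, hq⟩ := h
      have : p.1 = 5 * (j - q) + 4 := by omega
      rw [this, hF, cp_F4, zero_mul]
    · rw [coeff_expand_of_not_dvd _ _ _ h, mul_zero]
  have hP' : P = F * (G ^ (5 * k + 1)).expand 5 (by norm_num) := by
    rw [← cp_F5, ← pow_mul]
    have e : (5 * k + 1) * 5 = 25 * k + 4 + 1 := by ring
    rw [e, pow_succ]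
    linear_combination (-P) * hGp (25 * k + 4) + G ^ (25 * k + 4) * hP -
      G ^ (25 * k + 4) * hG
  rw [hP', coeff_mul]
  refine Finset.sum_eq_zero fun p hp => ?_
  rw [Finset.HasAntidiagonal.mem_antidiagonal] at hp
  by_cases h : 5 ∣ p.2
  · obtain ⟨q, hq⟩ := h
    by_cases h2 : q % 5 = 4
    · rw [hq, coeff_expand_mul, show q = 5 * (q / 5) + 4 by omega, hQ, mul_zero]
    · rw [hF, cp_F25 p.1 (by omega) (by omega), zero_mul]
  · rw [coeff_expand_of_not_dvd _ _ _ h, mul_zero]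

theorem colouredPartitions_cong_mod5_25k4 (k n : ℕ) :
    5 ∣ colouredPartitions (25 * k + 4) (25 * n + 21) := by
  have h := cp_final k n _ _ _ rfl (cp_series (25 * k + 4)) cp_partition_series
  rw [coeff_mk] at h
  exact (ZMod.natCast_eq_zero_iff _ 5).1 h
end

section
/- For every non-negative integer k, every non-negative integer n, and every j ∈ {2, 4, 5, 6}, the number of (7k+4)-colour partitions of 7n+j is divisible by 7; that is, p_{7k+4}(7n+j) ≡ 0 (mod 7). -/
namespace CP7
open Finset PowerSeries

/-- Gaussian binomial. -/
def G {A : Type*} [CommRing A] (q : A) : ℕ → ℕ → A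
  | _, 0 => 1
  | 0, _ + 1 => 0
  | n + 1, k + 1 => G q n k + q ^ (k + 1) * G q n (k + 1)

/-- q-Pochhammer. -/
def Q {A : Type*} [CommRing A] (q : A) (n : ℕ) : A := ∏ i ∈ range n, (1 - q ^ (i + 1))

lemma Q_succ {A : Type*} [CommRing A] (q : A) (n : ℕ) : Q q (n + 1) = Q q n * (1 - q ^ (n + 1)) := by
  simp [Q, prod_range_succ]

lemma G_zero {A : Type*} [CommRing A] (q : A) (n : ℕ) : G q n 0 = 1 := by
  cases n <;> simp [G]

lemma G_big {A : Type*} [CommRing A] (q : A) (n : ℕ) : ∀ k, n < k → G q n k = 0 := by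
  induction n with
  | zero => intro k hk; obtain ⟨k, rfl⟩ : ∃ l, k = l + 1 := ⟨k - 1, by omega⟩; simp [G]
  | succ n ih =>
    intro k hk; obtain ⟨k, rfl⟩ : ∃ l, k = l + 1 := ⟨k - 1, by omega⟩
    simp [G, ih k (by omega), ih (k + 1) (by omega)]

lemma G_mul {A : Type*} [CommRing A] (q : A) (n : ℕ) :
    ∀ a b, a + b = n → G q n a * Q q a * Q q b = Q q n := by
  induction n with
  | zero => intro a b h; obtain ⟨rfl, rfl⟩ : a = 0 ∧ b = 0 := by omega
            simp [G, Q]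
  | succ n ih =>
    intro a b h
    rcases a with _ | a
    · obtain rfl : b = n + 1 := by omega
      simp [G_zero, Q]
    · rcases b with _ | b
      · obtain rfl : a = n := by omega
        have := ih a 0 (by omega)
        simp only [G, G_big q a (a + 1) (by omega), Q_succ]
        linear_combination (1 - q ^ (a + 1)) * this
      · have h1 := ih a (b + 1) (by omega)
        have h2 := ih (a + 1) b (by omega)
        obtain rfl : n = a + b + 1 := by omega
        rw [Q_succ q (a + b + 1), Q_succ q b]
        rw [Q_succ q b] at h1
        rw [Q_succ q a] at h2 ⊢
        have hg : G q (a + b + 1 + 1) (a + 1) =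
          G q (a + b + 1) a + q ^ (a + 1) * G q (a + b + 1) (a + 1) := by rw [G]
        rw [hg]
        linear_combination (1 - q ^ (a + 1)) * h1 + q ^ (a + 1) * (1 - q ^ (b + 1)) * h2

lemma qbinom {A : Type*} [CommRing A] (q y : A) (n : ℕ) : ∀ x : A,
    ∏ i ∈ range n, (y + x * q ^ i) =
      ∑ k ∈ range (n + 1), q ^ (k.choose 2) * G q n k * x ^ k * y ^ (n - k) := by
  induction n with
  | zero => intro x; simp [G]
  | succ n ih =>
    intro x
    rw [prod_range_succ']
    have h1 : ∏ i ∈ range n, (y + x * q ^ (i + 1)) = ∏ i ∈ range n, (y + (x * q) * q ^ i) := by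
      refine prod_congr rfl fun i _ => by ring
    rw [h1, ih, sum_range_succ' _ (n + 1)]
    have h2 : ∀ k ∈ range (n + 1),
        q ^ ((k + 1).choose 2) * G q (n + 1) (k + 1) * x ^ (k + 1) * y ^ (n + 1 - (k + 1)) =
        x * (q ^ (k.choose 2) * G q n k * (x * q) ^ k * y ^ (n - k)) +
        q ^ ((k + 1).choose 2) * G q n (k + 1) * (x * q) ^ (k + 1) * y ^ (n - k) := by
      intro k _
      have : (k + 1).choose 2 = k.choose 2 + k := by
        rw [Nat.choose_succ_succ' k 1]; simp; omega
      rw [this, G, Nat.add_sub_add_right]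
      ring
    rw [sum_congr rfl h2, sum_add_distrib, ← mul_sum]
    have h3 : ∑ k ∈ range (n + 1), q ^ ((k + 1).choose 2) * G q n (k + 1) * (x * q) ^ (k + 1) * y ^ (n - k)
        + y ^ (n + 1) = y * ∑ k ∈ range (n + 1), q ^ (k.choose 2) * G q n k * (x * q) ^ k * y ^ (n - k) := by
      rw [sum_range_succ, G_big q n (n + 1) (by omega), sum_range_succ' _ n, mul_add, mul_sum]
      have : ∀ k ∈ range n, q ^ ((k + 1).choose 2) * G q n (k + 1) * (x * q) ^ (k + 1) * y ^ (n - k) =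
          y * (q ^ ((k + 1).choose 2) * G q n (k + 1) * (x * q) ^ (k + 1) * y ^ (n - (k + 1))) := by
        intro k hk
        have : n - k = (n - (k + 1)) + 1 := by have := mem_range.1 hk; omega
        rw [this]; ring
      rw [sum_congr rfl this]
      simp [G_zero]; ring
    simp only [G_zero, Nat.choose_zero_succ, pow_zero, Nat.sub_zero, mul_one, one_mul]
    linear_combination -h3

lemma jacobi_fin {A : Type*} [CommRing A] (q : A) (M : ℕ) :
    (-1) ^ (M + 1) * (q ^ (∑ i ∈ range M, i + M * M + M) * (Q q M * Q q M)) =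
      ∑ k ∈ range (2 * M + 1 + 1),
        q ^ (k.choose 2 + M * (2 * M + 1 - k)) * (((-1) ^ k * (k : A)) * G q (2 * M + 1) k) := by
  have h := qbinom (Polynomial.C q) (Polynomial.C (q ^ M)) (2 * M + 1) (-Polynomial.X)
  have hG : ∀ n k, G (Polynomial.C q) n k = Polynomial.C (G q n k) := by
    intro n
    induction n with
    | zero => intro k; cases k <;> simp [G]
    | succ n ih => intro k; cases k <;> simp [G, ih]
  rw [show 2 * M + 1 = M + (M + 1) by ring, prod_range_add, prod_range_succ'] at h
  have h' := congrArg (fun p => (Polynomial.derivative p).eval 1) h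
  have gen : ∀ a b c : Polynomial A, c.eval 1 = 0 → (Polynomial.derivative (a * (b * c))).eval 1 =
      a.eval 1 * (b.eval 1 * (Polynomial.derivative c).eval 1) := by
    intro a b c hc
    simp [Polynomial.derivative_mul, hc]
  beta_reduce at h'
  have e0 : Polynomial.eval 1 (Polynomial.C (q ^ M) + -Polynomial.X * Polynomial.C q ^ (M + 0)) = 0 := by
    simp
  have e1 : Polynomial.eval 1 (Polynomial.derivative
      (Polynomial.C (q ^ M) + -Polynomial.X * Polynomial.C q ^ (M + 0))) = - q ^ M := by
    rw [← Polynomial.C_pow]; simp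
  rw [gen _ _ _ e0, e1] at h'
  have e2 : Polynomial.eval 1 (∏ x ∈ range M, (Polynomial.C (q ^ M) + -Polynomial.X * Polynomial.C q ^ x))
      = (-1) ^ M * q ^ (∑ i ∈ range M, i) * Q q M := by
    rw [Polynomial.eval_prod, ← prod_pow_eq_pow_sum, Q, ← prod_range_reflect (fun i => 1 - q ^ (i + 1))]
    conv_rhs => rw [show (-1 : A) ^ M = ∏ i ∈ range M, (-1) by simp]
    rw [← prod_mul_distrib, ← prod_mul_distrib]
    refine prod_congr rfl fun i hi => ?_
    have hi := mem_range.1 hi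
    have : q ^ M = q ^ i * q ^ (M - 1 - i + 1) := by rw [← pow_add]; congr 1; omega
    simp only [Polynomial.eval_add, Polynomial.eval_mul, Polynomial.eval_neg, Polynomial.eval_C,
      Polynomial.eval_X, Polynomial.eval_pow]
    linear_combination this
  have e3 : Polynomial.eval 1 (∏ x ∈ range M, (Polynomial.C (q ^ M) + -Polynomial.X * Polynomial.C q ^ (M + (x + 1))))
      = q ^ (M * M) * Q q M := by
    rw [Polynomial.eval_prod, pow_mul, Q]
    conv_rhs => rw [show (q ^ M) ^ M = ∏ i ∈ range M, q ^ M by simp]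
    rw [← prod_mul_distrib]
    refine prod_congr rfl fun i hi => ?_
    simp only [Polynomial.eval_add, Polynomial.eval_mul, Polynomial.eval_neg, Polynomial.eval_C,
      Polynomial.eval_X, Polynomial.eval_pow]
    ring
  rw [e2, e3, Polynomial.derivative_sum, Polynomial.eval_finset_sum] at h'
  rw [show 2 * M + 1 = M + (M + 1) by ring]
  refine Eq.trans ?_ (h'.trans (sum_congr rfl fun k _ => ?_))
  · ring
  · rw [hG, ← Polynomial.C_pow, ← Polynomial.C_pow, ← Polynomial.C_mul, neg_pow,
      show ((-1 : Polynomial A)) = Polynomial.C (-1) by simp, ← Polynomial.C_pow, ← mul_assoc,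
      ← Polynomial.C_mul, mul_comm, ← mul_assoc, ← Polynomial.C_mul, Polynomial.derivative_C_mul_X_pow]
    simp
    ring

abbrev F := PowerSeries (ZMod 7)

instance fact7 : Fact (Nat.Prime 7) := ⟨by norm_num⟩

lemma Q_cong (L m : ℕ) (h : L ≤ m) : (X : F) ^ (L + 1) ∣ Q X m - Q X L := by
  induction m, h using Nat.le_induction with
  | base => simp
  | succ m hm ih =>
    rw [Q_succ]
    have : (X : F) ^ (L + 1) ∣ X ^ (m + 1) := pow_dvd_pow _ (by omega)
    have h2 := dvd_sub ih (this.mul_left (Q X m))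
    convert h2 using 1
    ring

lemma Q_unit (m : ℕ) : IsUnit (Q X m : F) := by
  rw [PowerSeries.isUnit_iff_constantCoeff]
  simp [Q, map_prod]

lemma GQ_cong (L M k : ℕ) (h1 : L ≤ M) (h2 : L ≤ k) (h3 : L + k ≤ 2 * M + 1) :
    (X : F) ^ (L + 1) ∣ G X (2 * M + 1) k * Q X M - 1 := by
  have key : ∀ m, L ≤ m → (X : F) ^ (L + 1) ∣ Q X m - Q X M := fun m hm => by
    have := dvd_sub (Q_cong L m hm) (Q_cong L M h1)
    simpa using this
  obtain ⟨a, ha⟩ := key k h2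
  obtain ⟨b, hb⟩ := key (2 * M + 1 - k) (by omega)
  obtain ⟨c, hc⟩ := key (2 * M + 1) (by omega)
  have hg := G_mul (X : F) (2 * M + 1) k (2 * M + 1 - k) (by omega)
  rw [← (Q_unit M).dvd_mul_right]
  rw [sub_eq_iff_eq_add] at ha hb hc
  rw [ha, hb, hc] at hg
  refine ⟨c - G X (2 * M + 1) k * (a * Q X M + b * Q X M + X ^ (L + 1) * a * b), ?_⟩
  linear_combination hg

lemma zmod_fact : ∀ m d k : ZMod 7, (m = 2 ∨ m = 4 ∨ m = 5 ∨ m = 6) → 2 * m = d * d + d →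
    (3 : ZMod 7) - k = d → k = 0 := by decide

lemma bd (d m L : ℤ) (hm : m ≤ L) (hL : 0 ≤ L) (h : d * d + d ≤ 2 * m) :
    d ≤ 2 * L ∧ -(2 * L + 1) ≤ d := by
  constructor <;> by_contra hh <;> push Not at hh <;> nlinarith

lemma bd0 (d : ℤ) : 0 ≤ d * d + d := by
  rcases le_or_gt 0 d with h | h <;> nlinarith

set_option maxHeartbeats 1000000 in
lemma cube_coeff (L m : ℕ) (hm : m ≤ L) (hr : m % 7 = 2 ∨ m % 7 = 4 ∨ m % 7 = 5 ∨ m % 7 = 6) :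
    coeff m ((Q X (7 * (L + 1) + 3) : F) ^ 3) = 0 := by
  obtain ⟨M, hM⟩ : ∃ M, M = 7 * (L + 1) + 3 := ⟨_, rfl⟩
  rw [← hM]
  have hj := congrArg (fun f => coeff (m + (∑ i ∈ range M, i + M * M + M)) (f * Q X M)) (jacobi_fin (X : F) M)
  obtain ⟨C, hC⟩ : ∃ C, C = ∑ i ∈ range M, i + M * M + M := ⟨_, rfl⟩
  have hC2 : (2 : ℤ) * C = 3 * M * M + M := by
    have := Finset.sum_range_id_mul_two M
    have h2 : M * (M - 1) + M = M * M := by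
      obtain ⟨N, rfl⟩ : ∃ N, M = N + 1 := ⟨M - 1, by omega⟩
      simp; ring
    have h3 : 2 * C = 3 * M * M + M := by rw [hC]; linarith
    exact_mod_cast h3
  rw [← hC] at hj
  have hl : ((-1 : F) ^ (M + 1) * (X ^ C * (Q X M * Q X M)) * Q X M) =
      X ^ C * (PowerSeries.C ((-1) ^ (M + 1)) * Q X M ^ 3) := by
    simp; ring
  simp only [hl] at hj
  rw [add_comm m C, coeff_X_pow_mul', if_pos (by omega), Nat.add_sub_cancel_left, coeff_C_mul,
    sum_mul, map_sum, sum_eq_zero] at hj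
  · rcases neg_one_pow_eq_or (ZMod 7) (M + 1) with h | h <;> simpa [h] using hj
  · intro k hk
    have hk := mem_range.1 hk
    obtain ⟨e, he⟩ : ∃ e, e = k.choose 2 + M * (2 * M + 1 - k) := ⟨_, rfl⟩
    rw [← he]
    have hk2 : k.choose 2 * 2 + k = k * k := by
      rw [Nat.choose_two_right, Nat.div_mul_cancel (Nat.even_mul_pred_self k).two_dvd]
      cases k <;> simp; ring
    have he2 : (2 : ℤ) * e = (k * k - k) + 2 * M * (2 * M + 1 - k) := by
      zify at hk2
      rw [he]
      push_cast [Nat.cast_sub (show k ≤ 2 * M + 1 by omega)]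
      linarith
    have hr' : ((X : F) ^ e * ((-1) ^ k * (k : F) * G X (2 * M + 1) k)) * Q X M =
        X ^ e * (PowerSeries.C ((-1) ^ k * (k : ZMod 7)) * (G X (2 * M + 1) k * Q X M)) := by
      simp; ring
    rw [hr', coeff_X_pow_mul']
    split_ifs with hle
    · rw [coeff_C_mul]
      have hq : ((M : ℤ) - k) * (M - k) + (M - k) = 2 * m - 2 * (C + m - e : ℤ) := by linarith
      have hle' : (e : ℤ) ≤ C + m := by exact_mod_cast hle
      have hm' : (m : ℤ) ≤ L := by exact_mod_cast hm
      obtain ⟨hb1, hb2⟩ := bd ((M : ℤ) - k) m L hm' (by positivity) (by linarith)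
      obtain ⟨u, hu⟩ := GQ_cong L M k (by omega) (by omega) (by omega)
      rw [sub_eq_iff_eq_add] at hu
      have hlt : C + m - e < L + 1 := by
        have : (C + m - e : ℤ) ≤ m := by
          have : 0 ≤ ((M : ℤ) - k) * (M - k) + (M - k) := by
            exact bd0 _
          linarith
        omega
      rw [hu, map_add, coeff_X_pow_mul', if_neg (by omega), coeff_one]
      split_ifs with h0
      · have h0' : (C : ℤ) + m - e = 0 := by omega
        rw [h0'] at hq
        have hz := congrArg (Int.cast : ℤ → ZMod 7) hq
        have hM7 : (M : ZMod 7) = 3 := by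
          rw [hM]; push_cast; rw [show (7 : ZMod 7) = 0 by decide]; ring
        push_cast at hz
        have hmz : (m : ZMod 7) = 2 ∨ (m : ZMod 7) = 4 ∨ (m : ZMod 7) = 5 ∨ (m : ZMod 7) = 6 := by
          rw [← ZMod.natCast_mod m 7]
          rcases hr with h | h | h | h <;> rw [h] <;> simp
        have hk0 := zmod_fact m (M - k) k hmz (by linear_combination -hz) (by rw [hM7])
        rw [hk0]; simp
      · simp
    · rfl

lemma expand_coeff (M a n : ℕ) (hn : ¬ 7 ∣ n) : coeff n ((Q X M : F) ^ (7 * a)) = 0 := by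
  have : (Q X M : F) ^ (7 * a) = (((Q (Polynomial.X : Polynomial (ZMod 7)) M ^ a) ^ 7 : Polynomial (ZMod 7)) : F) := by
    have hq : ((Q (Polynomial.X : Polynomial (ZMod 7)) M : Polynomial (ZMod 7)) : F) = Q X M := by
      simp only [Q]
      rw [← Polynomial.coeToPowerSeries.ringHom_apply, map_prod]
      simp
    rw [← pow_mul, mul_comm a, Polynomial.coe_pow, hq]
  rw [this, ← ZMod.expand_card, Polynomial.coeff_coe, Polynomial.coeff_expand (by norm_num), if_neg hn]

/-- Index set. -/
def S (r M : ℕ) : Finset (ℕ+ × Fin r) :=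
  ((range M).map ⟨Nat.succPNat, Nat.succPNat_injective⟩) ×ˢ univ

lemma mem_S (r M : ℕ) (x : ℕ+ × Fin r) : x ∈ S r M ↔ (x.1 : ℕ) ≤ M := by
  simp only [S, mem_product, mem_map, mem_range, Function.Embedding.coeFn_mk, mem_univ, and_true]
  constructor
  · rintro ⟨a, ha, h⟩
    rw [← h]; simpa using ha
  · intro h
    refine ⟨(x.1 : ℕ) - 1, ?_, ?_⟩
    · have := x.1.pos; omega
    · apply PNat.eq; have := x.1.pos; simp; omega

/-- Geometric series. -/
noncomputable def geo (w : ℕ) : F := PowerSeries.mk fun m => if w ∣ m then 1 else 0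

lemma geo_mul (w : ℕ) (hw : 0 < w) : geo w * (1 - X ^ w) = 1 := by
  ext n
  rw [mul_sub, mul_one, map_sub, mul_comm, coeff_X_pow_mul', coeff_one]
  simp only [geo, coeff_mk]
  by_cases h0 : n = 0
  · subst h0; simp; omega
  · by_cases h : w ≤ n
    · have := Nat.dvd_sub_self_right (n := w) (m := n)
      simp [h, h0, Nat.dvd_sub_iff_left h (dvd_refl w)]
    · have : ¬ w ∣ n := fun h' => h (Nat.le_of_dvd (by omega) h')
      simp [h, h0, this]

/-- Generating function. -/
noncomputable def H (r M : ℕ) : F := ∏ x ∈ S r M, geo (x.1 : ℕ)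

lemma H_mul (r M : ℕ) : H r M * Q X M ^ r = 1 := by
  have : (Q X M : F) ^ r = ∏ x ∈ S r M, (1 - X ^ (x.1 : ℕ)) := by
    rw [S, prod_product]
    simp [Q, prod_pow]
  rw [this, H, ← prod_mul_distrib]
  exact prod_eq_one fun x _ => geo_mul _ x.1.pos

lemma H_coeff (r M n : ℕ) (h : n ≤ M) : coeff n (H r M) = (colouredPartitions r n : ZMod 7) := by
  classical
  rw [H, coeff_prod]
  simp only [geo, coeff_mk, prod_ite_zero, prod_const_one]
  rw [sum_boole, colouredPartitions]
  congr 1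
  rw [← Nat.card_eq_finsetCard]
  symm
  have hsupp : ∀ f : ℕ+ × Fin r →₀ ℕ, (f.sum fun x m => (x.1 : ℕ) * m) = n → f.support ⊆ S r M := by
    intro f hf x hx
    rw [mem_S]
    have h1 : (x.1 : ℕ) * f x ≤ n := by
      rw [← hf, Finsupp.sum]
      exact single_le_sum (f := fun x : ℕ+ × Fin r => (x.1 : ℕ) * f x) (fun _ _ => Nat.zero_le _) hx
    have h2 : 0 < f x := Nat.pos_of_ne_zero (by simpa using hx)
    nlinarith
  refine Nat.card_congr (Equiv.ofBijective (fun f => ⟨Finsupp.onFinset f.1.support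
    (fun x => (x.1 : ℕ) * f.1 x) (by intro x hx; simp at hx ⊢; exact hx), ?_⟩) ⟨?_, ?_⟩)
  · obtain ⟨f, hf⟩ := f
    have hs := hsupp f hf
    simp only [mem_filter, mem_finsuppAntidiag]
    refine ⟨⟨?_, ?_⟩, ?_⟩
    · refine Eq.trans ?_ hf
      rw [Finsupp.sum_of_support_subset f hs _ (by simp)]
      simp
    · exact Finsupp.support_onFinset_subset.trans hs
    · intro i _; simp
  · rintro ⟨f, hf⟩ ⟨g, hg⟩ hfg
    simp only [Subtype.mk.injEq] at hfg ⊢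
    ext x
    have := DFunLike.congr_fun hfg x
    simpa using this
  · rintro ⟨l, hl⟩
    simp only [mem_filter, mem_finsuppAntidiag] at hl
    obtain ⟨⟨h1, h2⟩, h3⟩ := hl
    have h3' : ∀ x, (x.1 : ℕ) * (l x / (x.1 : ℕ)) = l x := by
      intro x
      by_cases hx : x ∈ S r M
      · exact Nat.mul_div_cancel' (h3 x hx)
      · have : l x = 0 := by
          by_contra h0
          exact hx (h2 (by simpa using h0))
        simp [this]
    refine ⟨⟨Finsupp.onFinset l.support (fun x => l x / (x.1 : ℕ)) ?_, ?_⟩, ?_⟩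
    · intro x hx; rw [Finsupp.mem_support_iff]; rintro h0; simp [h0] at hx
    · rw [Finsupp.sum_of_support_subset _ (Finsupp.support_onFinset_subset.trans h2) _ (by simp)]
      simp [h3', h1]
    · apply Subtype.ext
      ext x
      simp [h3']

lemma H_zero (k L : ℕ) : ∀ m, m ≤ L → (m % 7 = 2 ∨ m % 7 = 4 ∨ m % 7 = 5 ∨ m % 7 = 6) →
    coeff m (H (7 * k + 4) (7 * (L + 1) + 3)) = 0 := by
  intro m
  induction m using Nat.strong_induction_on with
  | _ m ih =>
    intro hm hr
    have hc := cube_coeff L m hm hr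
    set M := 7 * (L + 1) + 3 with hM
    have h1 : (Q X M : F) ^ 3 = Q X M ^ (7 * (k + 1)) * H (7 * k + 4) M := by
      linear_combination -(Q X M : F) ^ 3 * H_mul (7 * k + 4) M
    rw [h1, coeff_mul, sum_eq_single (0, m)] at hc
    · have : coeff 0 ((Q X M : F) ^ (7 * (k + 1))) = 1 := by
        simp [Q, map_prod]
      simpa [this] using hc
    · rintro ⟨a, b⟩ hab hne
      rw [HasAntidiagonal.mem_antidiagonal] at hab
      simp only at hab ⊢
      by_cases h7 : 7 ∣ a
      · rw [ih b ?_ (by omega) (by omega), mul_zero]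
        rcases Nat.eq_zero_or_pos a with rfl | h
        · exact absurd (by simpa using hab) (by simpa using hne)
        · omega
      · rw [expand_coeff _ _ _ h7, zero_mul]
    · intro h; simp at h

end CP7

theorem colouredPartitions_cong_mod7_4 (k n j : ℕ) (hj : j = 2 ∨ j = 4 ∨ j = 5 ∨ j = 6) :
    7 ∣ colouredPartitions (7 * k + 4) (7 * n + j) := by
  have h := CP7.H_zero k (7 * n + j) (7 * n + j) le_rfl (by omega)
  rw [CP7.H_coeff _ _ _ (by omega)] at h
  exact (ZMod.natCast_eq_zero_iff _ 7).1 h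
end
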